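/- arXiv:1802.01728 — 2 statements merged into one kernel-verified Lean document; each statement's English description precedes it below -/
import Mathlib

section
/- Let w₁ be a non-increasing positive locally integrable function on I₁=(0,a₁) with W₁(x)=∫₀ˣ w₁ dm, and let w₂ be a non-increasing positive locally integrable function on I₂=(0,W₁(a₁)) with W₂(t)=∫₀ᵗ w₂ dm. Then for every measurable function f on I₁, sup_{t∈I₂} (1/W₂(t))·∫₀ᵗ (f*∘W₁^{-1})(s) ds = sup_{x∈I₁} (1/W₂(W₁(x)))·∫₀ˣ f*(s)·w₁(s) ds, the equality understood in [0,∞]. In particular, f belongs to the Lorentz space Λ_{M_{W₂},w₁} (i.e. f*∘W₁^{-1} belongs to the Marcinkiewicz space M_{W₂} on I₂) if and only if sup_{x∈I₁} (1/(W₂∘W₁)(x))·∫₀ˣ f* w₁ dm < ∞, and this supremum is the norm of f in Λ_{M_{W₂},w₁}. -/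
open MeasureTheory Set Filter
open scoped ENNReal

/-- The interval `(0, a)` for `a : ℝ≥0∞` (equals `(0,∞)` when `a = ∞`). -/
def Iset (a : ℝ≥0∞) : Set ℝ := {x : ℝ | 0 < x ∧ ENNReal.ofReal x < a}

/-- Lebesgue measure restricted to the interval `(0,a)`. -/
noncomputable def volI (a : ℝ≥0∞) : Measure ℝ := volume.restrict (Iset a)

/-- Decreasing rearrangement of an `ℝ≥0∞`-valued function with respect to a measure `μ`:
`f^{*,μ}(t) = inf {s > 0 : μ({f > s}) ≤ t}`. -/
noncomputable def rearrE (μ : Measure ℝ) (f : ℝ → ℝ≥0∞) (t : ℝ) : ℝ≥0∞ :=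
  sInf {s : ℝ≥0∞ | 0 < s ∧ μ {x | s < f x} ≤ ENNReal.ofReal t}

/-- Decreasing rearrangement of a real function with respect to a measure `μ` on `ℝ`:
`f^{*,μ}(t) = inf {s > 0 : μ({|f| > s}) ≤ t}`. -/
noncomputable def rearr (μ : Measure ℝ) (f : ℝ → ℝ) (t : ℝ) : ℝ≥0∞ :=
  rearrE μ (fun x => ENNReal.ofReal |f x|) t

/-- The measure `w·dm` on the set `I`. -/
noncomputable def wMeas (I : Set ℝ) (w : ℝ → ℝ) : Measure ℝ :=
  (volume.restrict I).withDensity (fun t => ENNReal.ofReal (w t))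

/-- `W(t) = ∫₀ᵗ w dm`. -/
noncomputable def Wfun (w : ℝ → ℝ) (t : ℝ) : ℝ := ∫ s in Set.Ioo (0:ℝ) t, w s

/-- `b = ∫_I w dm` as an extended real number. -/
noncomputable def bval (a : ℝ≥0∞) (w : ℝ → ℝ) : ℝ≥0∞ := ∫⁻ x in Iset a, ENNReal.ofReal (w x)

/-- The left-hand supremum: `sup_{t∈I₂} (1/W₂(t))·∫₀ᵗ (f*∘W₁⁻¹)(s) ds`, i.e. the Marcinkiewicz
`M_{W₂}`-norm of `f* ∘ W₁⁻¹` on `I₂ = (0, W₁(a₁))`. -/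
noncomputable def marcSup₁ (a₁ : ℝ≥0∞) (w₁ w₂ f : ℝ → ℝ) : ℝ≥0∞ :=
  ⨆ t ∈ Iset (bval a₁ w₁),
    (∫⁻ s in Set.Ioo 0 t, rearr (volI a₁) f (Function.invFunOn (Wfun w₁) (Iset a₁) s)) /
      ENNReal.ofReal (Wfun w₂ t)

/-- The right-hand supremum: `sup_{x∈I₁} (1/W₂(W₁(x)))·∫₀ˣ f*·w₁ dm`. -/
noncomputable def marcSup₂ (a₁ : ℝ≥0∞) (w₁ w₂ f : ℝ → ℝ) : ℝ≥0∞ :=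
  ⨆ x ∈ Iset a₁,
    (∫⁻ s in Set.Ioo 0 x, rearr (volI a₁) f s * ENNReal.ofReal (w₁ s)) /
      ENNReal.ofReal (Wfun w₂ (Wfun w₁ x))


lemma aux_rearr_anti (μ : Measure ℝ) (f : ℝ → ℝ) : Antitone (rearr μ f) := by
  intro s t hst
  unfold rearr rearrE
  apply sInf_le_sInf
  rintro r ⟨h0, h1⟩
  exact ⟨h0, h1.trans (ENNReal.ofReal_le_ofReal hst)⟩

section aux
variable {a : ℝ≥0∞} {w : ℝ → ℝ}

lemma aux_mem_of_le {x y : ℝ} (hx : x ∈ Iset a) (hy : 0 < y) (hyx : y ≤ x) : y ∈ Iset a :=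
  ⟨hy, (ENNReal.ofReal_le_ofReal hyx).trans_lt hx.2⟩

lemma aux_sub {x : ℝ} (hx : x ∈ Iset a) : Ioo 0 x ⊆ Iset a :=
  fun _ hy => aux_mem_of_le hx hy.1 hy.2.le

lemma aux_W (hpos : ∀ x ∈ Iset a, 0 < w x)
    (hloc : ∀ x ∈ Iset a, IntegrableOn w (Set.Ioo 0 x)) {x : ℝ} (hx : x ∈ Iset a) :
    ENNReal.ofReal (Wfun w x) = ∫⁻ s in Ioo 0 x, ENNReal.ofReal (w s) := by
  unfold Wfun
  apply ofReal_integral_eq_lintegral_ofReal (hloc x hx)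
  filter_upwards [ae_restrict_mem measurableSet_Ioo] with y hy
  exact (hpos y (aux_sub hx hy)).le

lemma aux_strict (hpos : ∀ x ∈ Iset a, 0 < w x)
    (hloc : ∀ x ∈ Iset a, IntegrableOn w (Set.Ioo 0 x)) : StrictMonoOn (Wfun w) (Iset a) := by
  intro x hx y hy hxy
  have hu : Ioo 0 y = Ioo 0 x ∪ Ico x y := (Ioo_union_Ico_eq_Ioo hx.1 hxy.le).symm
  have hd : Disjoint (Ioo 0 x) (Ico x y) := by
    rw [Set.disjoint_left]
    intro z hz hz'
    exact absurd hz.2 (not_lt.2 hz'.1)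
  have hi : IntegrableOn w (Ico x y) := (hloc y hy).mono_set (by rw [hu]; exact subset_union_right)
  have h1 : Wfun w y = Wfun w x + ∫ s in Ico x y, w s := by
    unfold Wfun
    rw [hu, setIntegral_union hd measurableSet_Ico (hloc x hx) hi]
  have h2 : 0 < ∫ s in Ico x y, w s := by
    have hp : ∀ z ∈ Ico x y, 0 < w z := fun z hz =>
      hpos z (aux_mem_of_le hy (hx.1.trans_le hz.1) hz.2.le)
    rw [setIntegral_pos_iff_support_of_nonneg_ae _ hi]
    · have : Ico x y ⊆ Function.support w ∩ Ico x y := fun z hz => ⟨(hp z hz).ne', hz⟩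
      refine lt_of_lt_of_le ?_ (measure_mono this)
      simp [hxy]
    · filter_upwards [ae_restrict_mem measurableSet_Ico] with z hz
      exact (hp z hz).le
  linarith

lemma aux_zero : Wfun w 0 = 0 := by simp [Wfun]

lemma aux_pos (hpos : ∀ x ∈ Iset a, 0 < w x)
    (hloc : ∀ x ∈ Iset a, IntegrableOn w (Set.Ioo 0 x)) {x : ℝ} (hx : x ∈ Iset a) :
    0 < Wfun w x := by
  have h := aux_strict hpos hloc (aux_mem_of_le hx (half_pos hx.1) (half_le_self hx.1.le)) hx
    (half_lt_self hx.1)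
  refine lt_of_le_of_lt ?_ h
  unfold Wfun
  apply setIntegral_nonneg measurableSet_Ioo
  intro y hy
  exact (hpos y (aux_mem_of_le hx hy.1 (hy.2.le.trans (half_le_self hx.1.le)))).le

lemma aux_cont (hloc : ∀ x ∈ Iset a, IntegrableOn w (Set.Ioo 0 x)) {x : ℝ} (hx : x ∈ Iset a) :
    ContinuousOn (Wfun w) (Icc 0 x) := by
  have h : IntegrableOn w (Icc 0 x) := by
    rw [integrableOn_Icc_iff_integrableOn_Ioo]
    exact hloc x hx
  have := intervalIntegral.continuousOn_primitive h
  refine this.congr fun y _ => ?_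
  unfold Wfun
  exact (integral_Ioc_eq_integral_Ioo).symm

lemma aux_exists (s : ℝ≥0∞) (hs : s < bval a w) :
    ∃ x ∈ Iset a, s < ∫⁻ s in Ioo 0 x, ENNReal.ofReal (w s) := by
  have hU : Iset a = ⋃ q : {q : ℚ // (q : ℝ) ∈ Iset a}, Ioo (0:ℝ) ((q : ℚ) : ℝ) := by
    ext x
    simp only [mem_iUnion]
    constructor
    · intro hx
      obtain ⟨r, hr0, hr1, hr2⟩ := ENNReal.lt_iff_exists_rat_btwn.1 hx.2
      have hxr : x < (r : ℝ) := by
        by_contra hc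
        exact absurd hr1 (not_lt.2 (ENNReal.ofReal_le_ofReal (not_lt.1 hc)))
      exact ⟨⟨r, hx.1.trans hxr, hr2⟩, hx.1, hxr⟩
    · rintro ⟨q, hq⟩
      exact aux_sub q.2 hq
  unfold bval at hs
  rw [hU, setLIntegral_iUnion_of_directed] at hs
  · obtain ⟨q, hq⟩ := lt_iSup_iff.1 hs
    exact ⟨q.1, q.2, hq⟩
  · apply Monotone.directed_le
    intro p q hpq
    apply Ioo_subset_Ioo_right
    exact_mod_cast hpq

lemma aux_image (hpos : ∀ x ∈ Iset a, 0 < w x)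
    (hloc : ∀ x ∈ Iset a, IntegrableOn w (Set.Ioo 0 x)) :
    Wfun w '' Iset a = Iset (bval a w) := by
  apply Subset.antisymm
  · rintro _ ⟨x, hx, rfl⟩
    refine ⟨aux_pos hpos hloc hx, ?_⟩
    obtain ⟨r, hr0, hr1, hr2⟩ := ENNReal.lt_iff_exists_rat_btwn.1 hx.2
    have hxr : x < (r : ℝ) := by
      by_contra hc
      exact absurd hr1 (not_lt.2 (ENNReal.ofReal_le_ofReal (not_lt.1 hc)))
    have hr : (r : ℝ) ∈ Iset a := ⟨hx.1.trans hxr, hr2⟩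
    have h := aux_strict hpos hloc hx hr hxr
    refine ((ENNReal.ofReal_lt_ofReal_iff (aux_pos hpos hloc hr)).2 h).trans_le ?_
    rw [aux_W hpos hloc hr]
    exact lintegral_mono_set (aux_sub hr)
  · rintro s ⟨hs0, hs⟩
    obtain ⟨x, hx, h⟩ := aux_exists _ hs
    rw [← aux_W hpos hloc hx, ENNReal.ofReal_lt_ofReal_iff (aux_pos hpos hloc hx)] at h
    obtain ⟨z, hz, rfl⟩ := intermediate_value_Icc hx.1.le (aux_cont hloc hx)
      (show s ∈ Icc (Wfun w 0) (Wfun w x) from ⟨by rw [aux_zero]; exact hs0.le, h.le⟩)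
    refine ⟨z, aux_mem_of_le hx (lt_of_le_of_ne hz.1 ?_) hz.2, rfl⟩
    rintro rfl
    rw [aux_zero] at hs0
    exact lt_irrefl _ hs0

lemma aux_aem (hpos : ∀ x ∈ Iset a, 0 < w x)
    (hloc : ∀ x ∈ Iset a, IntegrableOn w (Set.Ioo 0 x)) {x : ℝ} (hx : x ∈ Iset a) :
    AEMeasurable (Wfun w) (volume.restrict (Ioo 0 x)) :=
  aemeasurable_restrict_of_monotoneOn measurableSet_Ioo
    ((aux_strict hpos hloc).monotoneOn.mono (aux_sub hx))

lemma aux_map (hmeas : Measurable w) (hpos : ∀ x ∈ Iset a, 0 < w x)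
    (hloc : ∀ x ∈ Iset a, IntegrableOn w (Set.Ioo 0 x)) {x : ℝ} (hx : x ∈ Iset a) :
    Measure.map (Wfun w) ((volume.restrict (Ioo 0 x)).withDensity fun t => ENNReal.ofReal (w t))
      = volume.restrict (Ioo 0 (Wfun w x)) := by
  have hac := withDensity_absolutelyContinuous (volume.restrict (Ioo 0 x))
    (fun t => ENNReal.ofReal (w t))
  have haem := (aux_aem hpos hloc hx).mono_ac hac
  have hst := aux_strict hpos hloc
  set ν := (volume.restrict (Ioo 0 x)).withDensity fun t => ENNReal.ofReal (w t) with hν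
  have hfin : IsFiniteMeasure ν := by
    apply isFiniteMeasure_withDensity
    rw [← aux_W hpos hloc hx]
    exact ENNReal.ofReal_ne_top
  have key : ∀ (S T : Set ℝ), MeasurableSet T → (S ∩ Ioo 0 x = T ∩ Ioo 0 x) →
      ν S = ∫⁻ t in T ∩ Ioo 0 x, ENNReal.ofReal (w t) := by
    intro S T hT hST
    have hS : S =ᵐ[ν] T := by
      apply hac.ae_le
      filter_upwards [ae_restrict_mem measurableSet_Ioo] with y hy
      have := Set.ext_iff.1 hST y
      simp only [mem_inter_iff, hy, and_true] at this
      exact propext this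
    rw [measure_congr hS, hν, withDensity_apply _ hT, Measure.restrict_restrict hT]
  apply Measure.ext_of_Iic
  intro s
  rw [Measure.map_apply_of_aemeasurable haem measurableSet_Iic,
    Measure.restrict_apply measurableSet_Iic]
  rcases le_or_gt s 0 with hs | hs
  · rw [key _ ∅ MeasurableSet.empty]
    · have : Iic s ∩ Ioo 0 (Wfun w x) = ∅ := by
        ext z
        simp only [mem_inter_iff, mem_Iic, mem_Ioo, mem_empty_iff_false, iff_false]
        rintro ⟨h1, h2, _⟩
        linarith
      rw [this]
      simp
    · ext z
      simp only [mem_inter_iff, mem_preimage, mem_Iic, mem_empty_iff_false, false_and, iff_false]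
      rintro ⟨h1, h2⟩
      have := aux_pos hpos hloc (aux_sub hx h2)
      linarith
  rcases le_or_gt (Wfun w x) s with hsx | hsx
  · rw [key _ univ MeasurableSet.univ]
    · rw [univ_inter, ← aux_W hpos hloc hx]
      have : Iic s ∩ Ioo 0 (Wfun w x) = Ioo 0 (Wfun w x) :=
        inter_eq_right.2 fun z hz => hz.2.le.trans hsx
      rw [this]
      simp
    · rw [univ_inter]
      apply inter_eq_right.2
      intro z hz
      exact (hst (aux_sub hx hz) hx hz.2).le.trans hsx
  · have hsI : s ∈ Wfun w '' Iset a := by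
      rw [aux_image hpos hloc]
      refine aux_mem_of_le ?_ hs hsx.le
      rw [← aux_image hpos hloc]
      exact ⟨x, hx, rfl⟩
    obtain ⟨y, hy, rfl⟩ := hsI
    have hyx : y < x := (hst.lt_iff_lt hy hx).1 hsx
    rw [key _ (Iic y) measurableSet_Iic]
    · have e1 : Iic y ∩ Ioo 0 x = Ioc 0 y := by
        ext z
        simp only [mem_inter_iff, mem_Iic, mem_Ioo, mem_Ioc]
        constructor
        · rintro ⟨h1, h2, _⟩
          exact ⟨h2, h1⟩
        · rintro ⟨h1, h2⟩
          exact ⟨h2, h1, h2.trans_lt hyx⟩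
      have e2 : Iic (Wfun w y) ∩ Ioo 0 (Wfun w x) = Ioc 0 (Wfun w y) := by
        ext z
        simp only [mem_inter_iff, mem_Iic, mem_Ioo, mem_Ioc]
        constructor
        · rintro ⟨h1, h2, _⟩
          exact ⟨h2, h1⟩
        · rintro ⟨h1, h2⟩
          exact ⟨h2, h1, h2.trans_lt hsx⟩
      rw [e1, e2, setLIntegral_congr Ioo_ae_eq_Ioc.symm, ← aux_W hpos hloc hy]
      simp
    · ext z
      simp only [mem_inter_iff, mem_preimage, mem_Iic, and_congr_left_iff]
      intro hz
      exact hst.le_iff_le (aux_sub hx hz) hy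

lemma aux_main (hmeas : Measurable w) (hpos : ∀ x ∈ Iset a, 0 < w x)
    (hloc : ∀ x ∈ Iset a, IntegrableOn w (Set.Ioo 0 x)) {x : ℝ} (hx : x ∈ Iset a)
    (g : ℝ → ℝ≥0∞) (hg : Antitone g) :
    (∫⁻ s in Ioo 0 (Wfun w x), g (Function.invFunOn (Wfun w) (Iset a) s)) =
      ∫⁻ s in Ioo 0 x, g s * ENNReal.ofReal (w s) := by
  have hac := withDensity_absolutelyContinuous (volume.restrict (Ioo 0 x))
    (fun t => ENNReal.ofReal (w t))
  have haem := (aux_aem hpos hloc hx).mono_ac hac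
  have hst := aux_strict hpos hloc
  have hsub : Ioo 0 (Wfun w x) ⊆ Wfun w '' Iset a := by
    rw [aux_image hpos hloc]
    apply aux_sub
    rw [← aux_image hpos hloc]
    exact ⟨x, hx, rfl⟩
  have hanti : AntitoneOn (fun s => g (Function.invFunOn (Wfun w) (Iset a) s))
      (Ioo 0 (Wfun w x)) := by
    intro s hs t ht hst'
    obtain ⟨y, hy, rfl⟩ := hsub hs
    obtain ⟨z, hz, rfl⟩ := hsub ht
    apply hg
    rw [hst.injOn.leftInvOn_invFunOn hy, hst.injOn.leftInvOn_invFunOn hz]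
    exact (hst.le_iff_le hy hz).1 hst'
  have hh := aemeasurable_restrict_of_antitoneOn (μ := volume) measurableSet_Ioo hanti
  rw [← aux_map hmeas hpos hloc hx] at hh ⊢
  rw [lintegral_map' hh haem, lintegral_withDensity_eq_lintegral_mul_non_measurable _
    hmeas.ennreal_ofReal (by simp)]
  apply setLIntegral_congr_fun measurableSet_Ioo
  intro y hy
  simp only [Pi.mul_apply]
  rw [hst.injOn.leftInvOn_invFunOn (aux_sub hx hy), mul_comm]

end aux

/-- For non-increasing positive locally integrable weights `w₁` on `I₁=(0,a₁)` and
`w₂` on `I₂=(0,W₁(a₁))`, and any measurable `f` on `I₁`,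
`sup_{t∈I₂} (1/W₂(t))∫₀ᵗ (f*∘W₁⁻¹) = sup_{x∈I₁} (1/(W₂∘W₁)(x))∫₀ˣ f* w₁`; in particular
`f ∈ Λ_{M_{W₂},w₁}` iff the right-hand supremum is finite, and it is the norm of `f`. -/
theorem stmt_14 (a₁ : ℝ≥0∞) (ha₁ : 0 < a₁) (w₁ w₂ : ℝ → ℝ)
    (h₁pos : ∀ x ∈ Iset a₁, 0 < w₁ x) (h₁anti : AntitoneOn w₁ (Iset a₁))
    (h₁meas : Measurable w₁)
    (h₁loc : ∀ x ∈ Iset a₁, IntegrableOn w₁ (Set.Ioo 0 x))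
    (h₂pos : ∀ t ∈ Iset (bval a₁ w₁), 0 < w₂ t)
    (h₂anti : AntitoneOn w₂ (Iset (bval a₁ w₁)))
    (h₂meas : Measurable w₂)
    (h₂loc : ∀ t ∈ Iset (bval a₁ w₁), IntegrableOn w₂ (Set.Ioo 0 t))
    (f : ℝ → ℝ) (hf : Measurable f) :
    marcSup₁ a₁ w₁ w₂ f = marcSup₂ a₁ w₁ w₂ f ∧
    (marcSup₁ a₁ w₁ w₂ f ≠ ∞ ↔ marcSup₂ a₁ w₁ w₂ f ≠ ∞) := by
  have h : marcSup₁ a₁ w₁ w₂ f = marcSup₂ a₁ w₁ w₂ f := by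
    unfold marcSup₁ marcSup₂
    rw [← aux_image h₁pos h₁loc, iSup_image]
    refine iSup_congr fun x => iSup_congr fun hx => ?_
    rw [aux_main h₁meas h₁pos h₁loc hx _ (aux_rearr_anti _ _)]
  exact ⟨h, by rw [h]⟩
end

section
/- Let w be a non-increasing positive function on I=(0,a), 0<a≤∞, with W(t)=∫₀ᵗ w dm finite on I. For a measurable function f on I, define A(f) = inf{ ∫_I |g|·w dm + ess sup|h| : g, h measurable on I, f*/w = g + h a.e. } (the norm of f*/w in L₁+L∞ with respect to the measure w·dm) and B(f) = inf{ ∫_I |u| dm + C : u measurable, C ≥ 0, f = u + v a.e. for some measurable v with v*(t) ≤ C·w(t) for all t∈I }. Then A(f) = B(f) for every measurable f on I (equality in [0,∞]). -/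
open MeasureTheory Set Filter
open scoped ENNReal

/-- `A(f)`: the norm of `f*/w` in `L₁+L∞` with respect to the measure `ω = w·dm` on `I`:
the infimum of `∫_I |g| w dm + ess sup |h|` over decompositions `f*/w = g + h` a.e. on `I`. -/
noncomputable def Anorm (a : ℝ≥0∞) (w f : ℝ → ℝ) : ℝ≥0∞ :=
  sInf {c : ℝ≥0∞ | ∃ g h : ℝ → ℝ, Measurable g ∧ Measurable h ∧
    (∀ᵐ t ∂(volI a), 0 ≤ g t + h t ∧
      rearr (volI a) f t / ENNReal.ofReal (w t) = ENNReal.ofReal (g t + h t)) ∧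
    c = (∫⁻ t in Iset a, ENNReal.ofReal |g t| * ENNReal.ofReal (w t)) +
        essSup (fun t => ENNReal.ofReal |h t|) (wMeas (Iset a) w)}

/-- `B(f)`: the infimum of `∫_I |u| dm + C` over decompositions `f = u + v` a.e. with
`v*(t) ≤ C·w(t)` for all `t ∈ I`. -/
noncomputable def Bnorm (a : ℝ≥0∞) (w f : ℝ → ℝ) : ℝ≥0∞ :=
  sInf {c : ℝ≥0∞ | ∃ u v : ℝ → ℝ, ∃ C : ℝ, Measurable u ∧ Measurable v ∧ 0 ≤ C ∧
    (∀ᵐ x ∂(volI a), f x = u x + v x) ∧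
    (∀ t ∈ Iset a, rearr (volI a) v t ≤ ENNReal.ofReal (C * w t)) ∧
    c = (∫⁻ x in Iset a, ENNReal.ofReal |u x|) + ENNReal.ofReal C}
/-! ### One-dimensional measure computations -/

theorem vol_lower (G F : ℝ≥0∞) :
    F - G ≤ volume {s : ℝ | 0 < s ∧ G < ENNReal.ofReal s ∧ ENNReal.ofReal s < F} := by
  rcases eq_or_ne G ⊤ with rfl | hG
  · simp
  rcases eq_or_ne F ⊤ with rfl | hF
  · have : Set.Ioi G.toReal ⊆ {s : ℝ | 0 < s ∧ G < ENNReal.ofReal s ∧ ENNReal.ofReal s < ⊤} := by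
      intro s hs
      have h0 : 0 < s := lt_of_le_of_lt ENNReal.toReal_nonneg hs
      exact ⟨h0, (ENNReal.lt_ofReal_iff_toReal_lt hG).2 hs, ENNReal.ofReal_lt_top⟩
    refine le_trans ?_ (measure_mono this)
    simp
  · have : Set.Ioo G.toReal F.toReal ⊆
        {s : ℝ | 0 < s ∧ G < ENNReal.ofReal s ∧ ENNReal.ofReal s < F} := by
      intro s hs
      have h0 : 0 < s := lt_of_le_of_lt ENNReal.toReal_nonneg hs.1
      exact ⟨h0, (ENNReal.lt_ofReal_iff_toReal_lt hG).2 hs.1,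
        (ENNReal.ofReal_lt_iff_lt_toReal h0.le hF).2 hs.2⟩
    refine le_trans ?_ (measure_mono this)
    rw [Real.volume_Ioo, ENNReal.ofReal_sub _ ENNReal.toReal_nonneg, ENNReal.ofReal_toReal hG,
      ENNReal.ofReal_toReal hF]

theorem vol_upper (G F : ℝ≥0∞) :
    volume {s : ℝ | 0 < s ∧ G ≤ ENNReal.ofReal s ∧ ENNReal.ofReal s < F} ≤ F - G := by
  rcases eq_or_ne G ⊤ with rfl | hG
  · simp
  rcases eq_or_ne F ⊤ with rfl | hF
  · rw [ENNReal.top_sub hG]; exact le_top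
  · have : {s : ℝ | 0 < s ∧ G ≤ ENNReal.ofReal s ∧ ENNReal.ofReal s < F} ⊆
        Set.Ico G.toReal F.toReal := by
      rintro s ⟨h0, h1, h2⟩
      exact ⟨(ENNReal.le_ofReal_iff_toReal_le hG h0.le).1 h1,
        (ENNReal.ofReal_lt_iff_lt_toReal h0.le hF).1 h2⟩
    refine le_trans (measure_mono this) ?_
    rw [Real.volume_Ico, ENNReal.ofReal_sub _ ENNReal.toReal_nonneg, ENNReal.ofReal_toReal hG,
      ENNReal.ofReal_toReal hF]

theorem vol_eq (G F : ℝ≥0∞) :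
    volume {s : ℝ | 0 < s ∧ G ≤ ENNReal.ofReal s ∧ ENNReal.ofReal s < F} = F - G := by
  refine le_antisymm (vol_upper G F) ((vol_lower G F).trans (measure_mono ?_))
  rintro s ⟨h0, h1, h2⟩
  exact ⟨h0, h1.le, h2⟩

theorem layer_cake (μ : Measure ℝ) [SFinite μ] (F G : ℝ → ℝ≥0∞) (hF : Measurable F)
    (hG : Measurable G) :
    ∫⁻ x, (F x - G x) ∂μ =
      ∫⁻ s in Set.Ioi (0:ℝ), μ {x | G x ≤ ENNReal.ofReal s ∧ ENNReal.ofReal s < F x} := by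
  set R : Set (ℝ × ℝ) := {p | G p.1 ≤ ENNReal.ofReal p.2 ∧ ENNReal.ofReal p.2 < F p.1} with hR
  have hRm : MeasurableSet R := by
    refine MeasurableSet.inter ?_ ?_
    · exact measurableSet_le (hG.comp measurable_fst) (ENNReal.measurable_ofReal.comp measurable_snd)
    · exact measurableSet_lt (ENNReal.measurable_ofReal.comp measurable_snd) (hF.comp measurable_fst)
  have h1 : (μ.prod (volume.restrict (Set.Ioi (0:ℝ)))) R = ∫⁻ x, (F x - G x) ∂μ := by
    rw [Measure.prod_apply hRm]
    refine lintegral_congr fun x => ?_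
    rw [Measure.restrict_apply (measurable_prodMk_left hRm), ← vol_eq]
    congr 1
    ext s
    simp only [hR, Set.mem_inter_iff, Set.mem_preimage, Set.mem_ofPred_eq, Set.mem_Ioi]
    tauto
  rw [← h1, Measure.prod_apply_symm hRm]
  rfl

/-! ### The measure on `(0,a)` -/

theorem Iset_meas (a : ℝ≥0∞) : MeasurableSet (Iset a) := by
  refine MeasurableSet.inter measurableSet_Ioi ?_
  exact measurableSet_lt ENNReal.measurable_ofReal measurable_const

instance volI_sfinite (a : ℝ≥0∞) : SFinite (volI a) := by unfold volI; infer_instance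

theorem volI_univ (a : ℝ≥0∞) : volI a Set.univ = a := by
  have := vol_eq 0 a
  simpa [volI, Iset] using this

theorem volI_le_vol (a : ℝ≥0∞) (S : Set ℝ) : volI a S ≤ volume S :=
  Measure.restrict_apply_le _ _

theorem volI_Iic (a : ℝ≥0∞) : volI a (Set.Iic 0) = 0 := by
  unfold volI
  rw [Measure.restrict_apply measurableSet_Iic]
  have : Set.Iic 0 ∩ Iset a = ∅ := by
    ext x
    simp only [Iset, Set.mem_inter_iff, Set.mem_Iic, Set.mem_ofPred_eq, Set.mem_empty_iff_false,
      iff_false]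
    intro h
    linarith [h.1, h.2.1]
  rw [this]; simp

theorem G_lip (a : ℝ≥0∞) (E : Set ℝ) (x y : ℝ) :
    volI a (E ∩ Set.Iic y) ≤ volI a (E ∩ Set.Iio x) + ENNReal.ofReal (y - x) := by
  have : E ∩ Set.Iic y ⊆ (E ∩ Set.Iio x) ∪ Set.Icc x y := by
    rintro z ⟨h1, h2⟩
    rcases lt_or_ge z x with h | h
    · exact Or.inl ⟨h1, h⟩
    · exact Or.inr ⟨h, h2⟩
  refine (measure_mono this).trans ((measure_union_le _ _).trans ?_)
  gcongr
  exact (volI_le_vol a _).trans (by rw [Real.volume_Icc])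

theorem G_mono (a : ℝ≥0∞) (E : Set ℝ) : Monotone fun x => volI a (E ∩ Set.Iio x) :=
  fun _ _ h => measure_mono (Set.inter_subset_inter_right _ (Set.Iio_subset_Iio h))

theorem initial_le (a : ℝ≥0∞) (E : Set ℝ) (r : ℝ≥0∞) :
    volI a (E ∩ {x | volI a (E ∩ Set.Iio x) ≤ r}) ≤ r := by
  set T := {x | volI a (E ∩ Set.Iio x) ≤ r} with hT
  have h0 : (0:ℝ) ∈ T := by
    have : volI a (E ∩ Set.Iio 0) ≤ 0 := by
      rw [← volI_Iic a]
      exact measure_mono (fun x hx => Set.mem_Iic.2 (le_of_lt (Set.mem_Iio.1 hx.2)))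
    exact this.trans bot_le
  by_cases hb : BddAbove T
  · set z := sSup T
    have hsub : E ∩ T ⊆ E ∩ Set.Iic z := fun x hx => ⟨hx.1, le_csSup hb hx.2⟩
    refine ENNReal.le_of_forall_pos_le_add fun δ hδ _ => ?_
    obtain ⟨x, hxT, hx⟩ := exists_lt_of_lt_csSup ⟨0, h0⟩
      (show z - (δ:ℝ) < sSup T from sub_lt_self _ (by exact_mod_cast hδ))
    refine (measure_mono hsub).trans ((G_lip a E x z).trans ?_)
    refine add_le_add hxT ?_
    rw [← ENNReal.ofReal_coe_nnreal]
    exact ENNReal.ofReal_le_ofReal (by linarith)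
  · have hall : ∀ n : ℕ, volI a (E ∩ Set.Iio (n:ℝ)) ≤ r := by
      intro n
      rw [not_bddAbove_iff] at hb
      obtain ⟨y, hy, hny⟩ := hb n
      exact (G_mono a E hny.le).trans hy
    have hE : E = ⋃ n : ℕ, E ∩ Set.Iio (n:ℝ) := by
      ext x
      simp only [Set.mem_iUnion, Set.mem_inter_iff, Set.mem_Iio]
      refine ⟨fun h => ?_, fun ⟨_, h, _⟩ => h⟩
      obtain ⟨n, hn⟩ := exists_nat_gt x
      exact ⟨n, h, hn⟩
    have hm : Monotone fun n : ℕ => E ∩ Set.Iio (n:ℝ) := by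
      intro i j h
      exact Set.inter_subset_inter_right _ (Set.Iio_subset_Iio (by exact_mod_cast h))
    refine (measure_mono Set.inter_subset_left).trans ?_
    conv_lhs => rw [hE]
    rw [hm.measure_iUnion]
    exact iSup_le hall

theorem le_initial (a : ℝ≥0∞) (E : Set ℝ) (r : ℝ≥0∞) (hr : r ≤ volI a E) :
    r ≤ volI a (E ∩ {x | volI a (E ∩ Set.Iio x) ≤ r}) := by
  set T := {x | volI a (E ∩ Set.Iio x) ≤ r} with hT
  have h0 : (0:ℝ) ∈ T := by
    have : volI a (E ∩ Set.Iio 0) ≤ 0 := by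
      rw [← volI_Iic a]
      exact measure_mono (fun x hx => Set.mem_Iic.2 (le_of_lt (Set.mem_Iio.1 hx.2)))
    exact this.trans bot_le
  by_cases hb : BddAbove T
  · set z := sSup T
    have hsub : E ∩ Set.Iio z ⊆ E ∩ T := by
      rintro x ⟨hx, hxz⟩
      obtain ⟨y, hyT, hy⟩ := exists_lt_of_lt_csSup ⟨0, h0⟩ hxz
      exact ⟨hx, (G_mono a E hy.le).trans hyT⟩
    refine ENNReal.le_of_forall_pos_le_add fun δ hδ _ => ?_
    have hδ' : (0:ℝ) < δ := by exact_mod_cast hδ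
    have h1 : z + δ ∉ T := fun h => by linarith [le_csSup hb h]
    have h2 : r < volI a (E ∩ Set.Iio (z + δ)) := not_le.1 h1
    refine h2.le.trans (le_trans (measure_mono (Set.inter_subset_inter_right _
      Set.Iio_subset_Iic_self)) ((G_lip a E z (z + δ)).trans ?_))
    refine add_le_add (measure_mono hsub) ?_
    rw [← ENNReal.ofReal_coe_nnreal]
    exact ENNReal.ofReal_le_ofReal (by linarith)
  · refine hr.trans (measure_mono fun x hx => ⟨hx, ?_⟩)
    rw [not_bddAbove_iff] at hb
    obtain ⟨y, hy, hny⟩ := hb x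
    exact (G_mono a E hny.le).trans hy

/-! ### Rearrangement -/

/-- Rearrangement with extended-real argument. -/
noncomputable def rr (μ : Measure ℝ) (F : ℝ → ℝ≥0∞) (t : ℝ≥0∞) : ℝ≥0∞ :=
  sInf {s : ℝ≥0∞ | μ {x | s < F x} ≤ t}

theorem dist_anti (μ : Measure ℝ) (F : ℝ → ℝ≥0∞) : Antitone fun s => μ {x | s < F x} :=
  fun _ _ h => measure_mono fun _ hx => lt_of_le_of_lt h hx

theorem rr_dist (μ : Measure ℝ) (F : ℝ → ℝ≥0∞) (t : ℝ≥0∞) : μ {x | rr μ F t < F x} ≤ t := by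
  set c := rr μ F t with hc
  rcases eq_or_ne c ⊤ with h | h
  · rw [h]; simp
  obtain ⟨u, hu, hlt, hlim⟩ := exists_seq_strictAnti_tendsto' (lt_top_iff_ne_top.2 h)
  have hU : {x | c < F x} ⊆ ⋃ n, {x | u n < F x} := by
    intro x hx
    obtain ⟨n, hn⟩ := (hlim.eventually_lt_const hx).exists
    exact Set.mem_iUnion.2 ⟨n, hn⟩
  have hm : Monotone fun n => {x | u n < F x} := fun i j hij x hx =>
    lt_of_le_of_lt (hu.antitone hij) hx
  refine (measure_mono hU).trans ?_
  rw [hm.measure_iUnion]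
  refine iSup_le fun n => ?_
  obtain ⟨s, hs, hsn⟩ := sInf_lt_iff.1 (show sInf _ < u n from (hlt n).1)
  exact (dist_anti μ F hsn.le).trans hs

theorem rr_le_iff (μ : Measure ℝ) (F : ℝ → ℝ≥0∞) (t s : ℝ≥0∞) :
    rr μ F t ≤ s ↔ μ {x | s < F x} ≤ t :=
  ⟨fun h => (dist_anti μ F h).trans (rr_dist μ F t), fun h => sInf_le h⟩

theorem rearrE_eq (μ : Measure ℝ) (F : ℝ → ℝ≥0∞) (t : ℝ) :
    rearrE μ F t = rr μ F (ENNReal.ofReal t) := by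
  refine le_antisymm ?_ (sInf_le_sInf fun s hs => hs.2)
  refine le_of_forall_gt fun s hs => ?_
  obtain ⟨s', h1, h2⟩ := exists_between hs
  refine lt_of_le_of_lt (sInf_le ⟨lt_of_le_of_lt bot_le h1, ?_⟩) h2
  exact (rr_le_iff _ _ _ _).1 h1.le

theorem rr_anti (μ : Measure ℝ) (F : ℝ → ℝ≥0∞) : Antitone (rr μ F) :=
  fun _ _ h => sInf_le_sInf fun _ hs => le_trans hs h

theorem rearrE_meas (μ : Measure ℝ) (F : ℝ → ℝ≥0∞) : Measurable (rearrE μ F) := by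
  have : rearrE μ F = fun t => rr μ F (ENNReal.ofReal t) := funext (rearrE_eq μ F)
  rw [this]
  exact (rr_anti μ F).measurable.comp ENNReal.measurable_ofReal

theorem le_dist_ge (μ : Measure ℝ) (F : ℝ → ℝ≥0∞) (hF : Measurable F) (τ s : ℝ≥0∞)
    (h1 : τ < μ {x | s < F x}) (h2 : μ {x | s < F x} ≠ ⊤) :
    τ ≤ μ {x | rr μ F τ ≤ F x} := by
  set c := rr μ F τ with hc
  have hsc : s < c := by
    rw [← not_le, hc, rr_le_iff, not_le]; exact h1
  obtain ⟨u, hu, hlt, hlim⟩ := exists_seq_strictMono_tendsto' hsc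
  have hI : {x | c ≤ F x} = ⋂ n, {x | u n < F x} := by
    ext x
    simp only [Set.mem_ofPred_eq, Set.mem_iInter]
    refine ⟨fun h n => lt_of_lt_of_le (hlt n).2 h, fun h => ?_⟩
    exact le_of_tendsto' hlim fun n => (h n).le
  have ha : Antitone fun n => {x | u n < F x} := fun i j hij x hx =>
    lt_of_le_of_lt (hu.monotone hij) hx
  rw [hI, ha.measure_iInter
    (fun n => (measurableSet_lt measurable_const hF).nullMeasurableSet)
    ⟨0, ne_top_of_le_ne_top h2 (dist_anti μ F (hlt 0).1.le)⟩]
  refine le_iInf fun n => ?_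
  have : u n < rr μ F τ := (hlt n).2
  rw [← not_le, rr_le_iff, not_le] at this
  exact this.le

/-! ### The rank function -/

/-- Rank of `x` for the order by larger value of `F` first, ties broken by position. -/
noncomputable def rk (μ : Measure ℝ) (F : ℝ → ℝ≥0∞) (x : ℝ) : ℝ≥0∞ :=
  μ {y | F x < F y ∨ (F y = F x ∧ y < x)}

theorem rk_meas (μ : Measure ℝ) [SFinite μ] (F : ℝ → ℝ≥0∞) (hF : Measurable F) :
    Measurable (rk μ F) := by
  have hR : MeasurableSet {p : ℝ × ℝ | F p.1 < F p.2 ∨ (F p.2 = F p.1 ∧ p.2 < p.1)} := by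
    refine MeasurableSet.union ?_ (MeasurableSet.inter ?_ ?_)
    · exact measurableSet_lt (hF.comp measurable_fst) (hF.comp measurable_snd)
    · exact measurableSet_eq_fun (hF.comp measurable_snd) (hF.comp measurable_fst)
    · exact measurableSet_lt measurable_snd measurable_fst
  exact measurable_measure_prodMk_left hR

theorem rk_ge (μ : Measure ℝ) (F : ℝ → ℝ≥0∞) (s : ℝ≥0∞) (x : ℝ) (h : F x ≤ s) :
    μ {y | s < F y} ≤ rk μ F x :=
  measure_mono fun _ hy => Or.inl (lt_of_le_of_lt h hy)

theorem rk_le (μ : Measure ℝ) (F : ℝ → ℝ≥0∞) (s : ℝ≥0∞) (x : ℝ) (h : s < F x) :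
    rk μ F x ≤ μ {y | s < F y} := by
  refine measure_mono ?_
  rintro y (hy | ⟨hy, _⟩)
  · exact h.trans hy
  · exact lt_of_lt_of_eq h hy.symm

theorem rk_split (μ : Measure ℝ) (F : ℝ → ℝ≥0∞) (hF : Measurable F) (x : ℝ) :
    rk μ F x = μ {y | F x < F y} + μ ({y | F y = F x} ∩ Set.Iio x) := by
  rw [← measure_union']
  · rfl
  · rw [Set.disjoint_left]
    rintro y h1 ⟨h2, _⟩
    exact (ne_of_lt h1) h2.symm
  · exact measurableSet_lt measurable_const hF

theorem rk_set (a : ℝ≥0∞) (F : ℝ → ℝ≥0∞) (hF : Measurable F) (t : ℝ≥0∞) (ht : t ≠ ⊤) :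
    {x | rk (volI a) F x ≤ t} = {x | rr (volI a) F t < F x} ∪
      ({x | F x = rr (volI a) F t} ∩ {x | volI a ({y | F y = rr (volI a) F t} ∩ Set.Iio x) ≤
        t - volI a {x | rr (volI a) F t < F x}}) := by
  set c := rr (volI a) F t with hc
  have hp := rr_dist (volI a) F t
  rw [← hc] at hp
  have hpt := ne_top_of_le_ne_top ht hp
  ext x
  rcases lt_trichotomy (F x) c with h | h | h
  · have h1 : t < volI a {y | F x < F y} := by
      rw [← not_le, ← rr_le_iff, not_le]; exact h
    have h2 := lt_of_lt_of_le h1 (rk_ge (volI a) F (F x) x le_rfl)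
    constructor
    · intro h3
      exact absurd h3 (not_le.2 h2)
    · rintro (h3 | ⟨h3, _⟩)
      · exact absurd h3 (not_lt.2 h.le)
      · exact absurd h3 h.ne
  · have : rk (volI a) F x ≤ t ↔ volI a ({y | F y = c} ∩ Set.Iio x) ≤
        t - volI a {x | c < F x} := by
      rw [rk_split _ _ hF, h, add_comm]
      exact (ENNReal.le_sub_iff_add_le_right hpt hp).symm
    constructor
    · intro h3
      exact Or.inr ⟨h, this.1 h3⟩
    · rintro (h3 | ⟨_, h3⟩)
      · exact absurd h3 (not_lt.2 h.le)
      · exact this.2 h3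
  · constructor
    · intro _
      exact Or.inl h
    · intro _
      exact (rk_le (volI a) F c x h).trans hp

theorem rk_measure (a : ℝ≥0∞) (F : ℝ → ℝ≥0∞) (hF : Measurable F) (t : ℝ≥0∞) (ht : t ≠ ⊤) :
    volI a {x | rk (volI a) F x ≤ t} ≤ t ∧
    (∀ s, t < volI a {x | s < F x} → volI a {x | s < F x} ≠ ⊤ →
      t ≤ volI a {x | rk (volI a) F x ≤ t}) := by
  rw [rk_set a F hF t ht]
  have hle := le_dist_ge (volI a) F hF t
  have hp := rr_dist (volI a) F t
  set c := rr (volI a) F t with hc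
  have hmP : MeasurableSet {x | c < F x} := measurableSet_lt measurable_const hF
  constructor
  · refine (measure_union_le _ _).trans ?_
    refine (add_le_add le_rfl (initial_le a _ _)).trans ?_
    rw [add_tsub_cancel_of_le hp]
  · intro s h1 h2
    rw [measure_union' _ hmP]
    · have h3 := hle s h1 h2
      have h4 : {x | c ≤ F x} ⊆ {x | c < F x} ∪ {x | F x = c} := by
        intro x hx
        have hx' : c ≤ F x := hx
        rcases lt_or_eq_of_le hx' with h | h
        · exact Or.inl h
        · exact Or.inr h.symm
      have h5 := h3.trans ((measure_mono h4).trans (measure_union_le _ _))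
      have h6 := le_initial a {x | F x = c} (t - volI a {x | c < F x})
        (tsub_le_iff_left.2 h5)
      calc t = volI a {x | c < F x} + (t - volI a {x | c < F x}) :=
            (add_tsub_cancel_of_le hp).symm
        _ ≤ _ := add_le_add le_rfl h6
    · rw [Set.disjoint_left]
      rintro y h1 ⟨h2, _⟩
      exact (ne_of_lt h1) (Eq.symm h2)

theorem rk_lower (a : ℝ≥0∞) (F : ℝ → ℝ≥0∞) (hF : Measurable F) (s τ : ℝ≥0∞)
    (h1 : τ ≤ volI a {x | s < F x}) (h2 : volI a {x | s < F x} ≠ ⊤) :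
    τ ≤ volI a {x | rk (volI a) F x < τ} := by
  refine le_of_forall_lt_imp_le_of_dense fun t ht => ?_
  refine ((rk_measure a F hF t ht.ne_top).2 s (lt_of_lt_of_le ht h1) h2).trans ?_
  exact measure_mono fun x hx => lt_of_le_of_lt hx ht

theorem rk_tail (a : ℝ≥0∞) (F : ℝ → ℝ≥0∞) (hF : Measurable F) (s τ : ℝ≥0∞) (hτ : τ ≠ ⊤) :
    volI a {x | s < F x ∧ τ ≤ rk (volI a) F x} ≤ volI a {x | s < F x} - τ := by
  rcases eq_or_ne (volI a {x | s < F x}) ⊤ with h | h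
  · rw [h, ENNReal.top_sub hτ]; exact le_top
  rcases lt_or_ge (volI a {x | s < F x}) τ with h1 | h1
  · have : {x | s < F x ∧ τ ≤ rk (volI a) F x} = ∅ := by
      rw [Set.eq_empty_iff_forall_notMem]
      rintro x ⟨h3, h4⟩
      exact absurd (h4.trans (rk_le (volI a) F s x h3)) (not_le.2 h1)
    rw [this]; simp
  · have h2 := rk_lower a F hF s τ h1 h
    refine ENNReal.le_sub_of_add_le_right hτ ?_
    refine (add_le_add le_rfl h2).trans ?_
    rw [← measure_union _ (measurableSet_lt (rk_meas _ F hF) measurable_const)]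
    · refine measure_mono ?_
      rintro x (hx | hx)
      · exact hx.1
      · by_contra h3
        exact absurd (h1.trans (rk_ge (volI a) F s x (not_lt.1 h3))) (not_le.2 hx)
    · rw [Set.disjoint_left]
      rintro y ⟨_, h1⟩ h2
      exact absurd h1 (not_le.2 h2)

/-! ### The two comparisons of integrals -/

theorem rearr_sub_le (a : ℝ≥0∞) (F V : ℝ → ℝ≥0∞) (hF : Measurable F) (hV : Measurable V) :
    ∫⁻ t, (rearrE (volI a) F t - rearrE (volI a) V t) ∂(volI a) ≤
      ∫⁻ x, (F x - V x) ∂(volI a) := by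
  rw [layer_cake _ _ _ (rearrE_meas _ _) (rearrE_meas _ _), layer_cake _ _ _ hF hV]
  refine lintegral_mono fun s => ?_
  set r := ENNReal.ofReal s
  have h1 : {t | rearrE (volI a) V t ≤ r ∧ r < rearrE (volI a) F t} =
      {t | volI a {x | r < V x} ≤ ENNReal.ofReal t ∧ ENNReal.ofReal t < volI a {x | r < F x}} := by
    ext t
    rw [Set.mem_ofPred_eq, Set.mem_ofPred_eq, rearrE_eq, rearrE_eq, rr_le_iff, ← not_le,
      rr_le_iff, not_le]
  have hm : MeasurableSet {t : ℝ | volI a {x | r < V x} ≤ ENNReal.ofReal t ∧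
      ENNReal.ofReal t < volI a {x | r < F x}} :=
    (measurableSet_le measurable_const ENNReal.measurable_ofReal).inter
      (measurableSet_lt ENNReal.measurable_ofReal measurable_const)
  show volI a {t | rearrE (volI a) V t ≤ r ∧ r < rearrE (volI a) F t} ≤ _
  rw [h1]
  calc _ ≤ volume {t : ℝ | 0 < t ∧ volI a {x | r < V x} ≤ ENNReal.ofReal t ∧
        ENNReal.ofReal t < volI a {x | r < F x}} := by
        unfold volI at hm ⊢
        rw [Measure.restrict_apply hm]
        exact measure_mono fun t ht => ⟨ht.2.1, ht.1⟩
    _ ≤ volI a {x | r < F x} - volI a {x | r < V x} := vol_upper _ _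
    _ ≤ volI a ({x | r < F x} \ {x | r < V x}) := le_measure_sdiff
    _ ≤ volI a {x | V x ≤ r ∧ r < F x} := measure_mono fun x hx => ⟨not_lt.1 hx.2, hx.1⟩

theorem construct_le (a : ℝ≥0∞) (F : ℝ → ℝ≥0∞) (hF : Measurable F) (k : ℝ≥0∞ → ℝ≥0∞)
    (hk : Antitone k) (hktop : ∀ s, k ⊤ < s → ∃ r, r ≠ ⊤ ∧ k r ≤ s) :
    ∫⁻ x, (F x - k (rk (volI a) F x)) ∂(volI a) ≤
      ∫⁻ t, (rearrE (volI a) F t - k (ENNReal.ofReal t)) ∂(volI a) := by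
  rw [layer_cake _ _ (fun t => k (ENNReal.ofReal t)) (rearrE_meas _ _)
      (hk.measurable.comp ENNReal.measurable_ofReal),
    layer_cake _ _ (fun x => k (rk (volI a) F x)) hF (hk.measurable.comp (rk_meas _ F hF))]
  have hne : ∀ᵐ s ∂(volume.restrict (Set.Ioi (0:ℝ))), s ≠ (k ⊤).toReal := by
    refine ae_restrict_of_ae ?_
    exact Measure.ae_ne volume _
  refine lintegral_mono_ae ?_
  filter_upwards [hne, ae_restrict_mem measurableSet_Ioi] with s hs hs0
  have hs0 : 0 < s := hs0
  set r := ENNReal.ofReal s with hr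
  have hkr : k ⊤ ≠ r := by
    intro h
    apply hs
    rw [h, hr, ENNReal.toReal_ofReal hs0.le]
  rcases lt_or_gt_of_ne hkr with hlt | hgt
  · obtain ⟨r0, hr0, hkr0⟩ := hktop r hlt
    set K : Set ℝ≥0∞ := {t | k t ≤ r} with hK
    set τ := sInf K with hτ
    have hτt : τ ≠ ⊤ := ne_top_of_le_ne_top hr0 (sInf_le hkr0)
    set N := volI a {x | r < F x} with hN
    have hNa : N ≤ a := by
      rw [← volI_univ a]; exact measure_mono (Set.subset_univ _)
    calc volI a {x | k (rk (volI a) F x) ≤ r ∧ r < F x}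
        ≤ volI a {x | r < F x ∧ τ ≤ rk (volI a) F x} :=
          measure_mono fun x hx => ⟨hx.2, sInf_le hx.1⟩
      _ ≤ N - τ := rk_tail a F hF r τ hτt
      _ ≤ volume {t : ℝ | 0 < t ∧ τ < ENNReal.ofReal t ∧ ENNReal.ofReal t < N} := vol_lower _ _
      _ ≤ volI a {t | k (ENNReal.ofReal t) ≤ r ∧ r < rearrE (volI a) F t} := by
          have hm : MeasurableSet {t | k (ENNReal.ofReal t) ≤ r ∧ r < rearrE (volI a) F t} :=
            (measurableSet_le (hk.measurable.comp ENNReal.measurable_ofReal)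
              measurable_const).inter (measurableSet_lt measurable_const (rearrE_meas _ _))
          have h0 : volI a {t | k (ENNReal.ofReal t) ≤ r ∧ r < rearrE (volI a) F t} =
              volume ({t | k (ENNReal.ofReal t) ≤ r ∧ r < rearrE (volI a) F t} ∩ Iset a) :=
            Measure.restrict_apply hm
          rw [h0]
          refine measure_mono ?_
          rintro t ⟨h1, h2, h3⟩
          refine ⟨⟨?_, ?_⟩, h1, lt_of_lt_of_le h3 hNa⟩
          · obtain ⟨q, hq, hqt⟩ := sInf_lt_iff.1 h2
            exact (hk hqt.le).trans hq
          · rw [rearrE_eq, ← not_le, rr_le_iff, not_le]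
            exact h3
  · have : {x | k (rk (volI a) F x) ≤ r ∧ r < F x} = ∅ := by
      rw [Set.eq_empty_iff_forall_notMem]
      rintro x ⟨h1, _⟩
      exact absurd ((hk le_top).trans h1) (not_le.2 hgt)
    show volI a {x | k (rk (volI a) F x) ≤ r ∧ r < F x} ≤ _
    rw [this]; simp

theorem A_le_B (a : ℝ≥0∞) (w : ℝ → ℝ)
    (hw_pos : ∀ x ∈ Iset a, 0 < w x) (hw_meas : Measurable w)
    (f : ℝ → ℝ) (hf : Measurable f) :
    Anorm a w f ≤ Bnorm a w f := by
  refine le_sInf ?_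
  rintro c ⟨u, v, C, hu, hv, hC, hfuv, hvC, rfl⟩
  by_cases hfin : (∫⁻ x in Iset a, ENNReal.ofReal |u x|) = ⊤
  · rw [hfin]; simp
  have hmemI : ∀ᵐ t ∂(volI a), t ∈ Iset a := ae_restrict_mem (Iset_meas a)
  set fs := rearr (volI a) f with hfs
  have hfsm : Measurable fs := rearrE_meas _ _
  set q : ℝ → ℝ≥0∞ := fun t => fs t / ENNReal.ofReal (w t) with hq
  have hqm : Measurable q := hfsm.div (ENNReal.measurable_ofReal.comp hw_meas)
  have hmain : ∫⁻ t, (fs t - rearr (volI a) v t) ∂(volI a) ≤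
      ∫⁻ x in Iset a, ENNReal.ofReal |u x| := by
    refine (rearr_sub_le a _ _ (ENNReal.measurable_ofReal.comp hf.abs)
      (ENNReal.measurable_ofReal.comp hv.abs)).trans ?_
    refine lintegral_mono_ae ?_
    filter_upwards [hfuv] with x hx
    show ENNReal.ofReal |f x| - ENNReal.ofReal |v x| ≤ ENNReal.ofReal |u x|
    rw [tsub_le_iff_right, ← ENNReal.ofReal_add (abs_nonneg _) (abs_nonneg _)]
    refine ENNReal.ofReal_le_ofReal ?_
    rw [hx]
    exact abs_add_le _ _
  have hCm : ∀ t ∈ Iset a, (q t - ENNReal.ofReal C) * ENNReal.ofReal (w t) ≤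
      fs t - rearr (volI a) v t := by
    intro t ht
    have hwp := hw_pos t ht
    have h0 : ENNReal.ofReal (w t) ≠ 0 := by simpa using hwp
    rw [ENNReal.sub_mul (fun _ _ => ENNReal.ofReal_ne_top), hq]
    simp only
    rw [ENNReal.div_mul_cancel h0 ENNReal.ofReal_ne_top, ← ENNReal.ofReal_mul hC]
    exact tsub_le_tsub_left (hvC t ht) _
  have hfsfin : ∀ᵐ t ∂(volI a), fs t < ⊤ := by
    have h1 : ∀ᵐ t ∂(volI a), fs t - rearr (volI a) v t < ⊤ := by
      refine ae_lt_top (hfsm.sub (rearrE_meas _ _)) ?_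
      exact ne_top_of_le_ne_top hfin hmain
    filter_upwards [h1, hmemI] with t h1 h2
    have h3 : rearr (volI a) v t < ⊤ := lt_of_le_of_lt (hvC t h2) ENNReal.ofReal_lt_top
    exact lt_of_le_of_lt le_tsub_add (ENNReal.add_lt_top.2 ⟨h1, h3⟩)
  set g : ℝ → ℝ := fun t => (q t - ENNReal.ofReal C).toReal with hg
  set h : ℝ → ℝ := fun t => (min (q t) (ENNReal.ofReal C)).toReal with hh
  have hqfin : ∀ᵐ t ∂(volI a), q t < ⊤ := by
    filter_upwards [hfsfin, hmemI] with t h1 h2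
    have hwp := hw_pos t h2
    have h0 : ENNReal.ofReal (w t) ≠ 0 := by simpa using hwp
    exact ENNReal.div_lt_top h1.ne h0
  refine le_trans (sInf_le ⟨g, h, (hqm.sub measurable_const).ennreal_toReal,
    (hqm.min measurable_const).ennreal_toReal, ?_, rfl⟩) ?_
  · filter_upwards [hqfin] with t h1
    have hg0 : 0 ≤ g t := ENNReal.toReal_nonneg
    have hh0 : 0 ≤ h t := ENNReal.toReal_nonneg
    refine ⟨add_nonneg hg0 hh0, ?_⟩
    rw [ENNReal.ofReal_add hg0 hh0, hg, hh]
    simp only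
    rw [ENNReal.ofReal_toReal (ne_top_of_le_ne_top h1.ne tsub_le_self),
      ENNReal.ofReal_toReal (ne_top_of_le_ne_top h1.ne (min_le_left _ _)), tsub_add_min]
  · refine add_le_add ?_ ?_
    · refine le_trans ?_ hmain
      show ∫⁻ t, _ ∂(volI a) ≤ _
      refine lintegral_mono_ae ?_
      filter_upwards [hmemI] with t ht
      refine le_trans ?_ (hCm t ht)
      gcongr
      rw [hg, abs_of_nonneg ENNReal.toReal_nonneg]
      exact ENNReal.ofReal_toReal_le
    · refine essSup_le_of_ae_le _ (Filter.Eventually.of_forall fun t => ?_)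
      simp only [hh]
      rw [abs_of_nonneg ENNReal.toReal_nonneg]
      exact ENNReal.ofReal_toReal_le.trans (min_le_right _ _)

theorem B_le_A (a : ℝ≥0∞) (w : ℝ → ℝ)
    (hw_pos : ∀ x ∈ Iset a, 0 < w x) (hw_anti : AntitoneOn w (Iset a)) (hw_meas : Measurable w)
    (f : ℝ → ℝ) (hf : Measurable f) :
    Bnorm a w f ≤ Anorm a w f := by
  refine le_sInf ?_
  rintro c ⟨g, h, hg, hh, hgh, rfl⟩
  set M := essSup (fun t => ENNReal.ofReal |h t|) (wMeas (Iset a) w) with hM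
  by_cases hMfin : M = ⊤
  · rw [hMfin]; simp
  have hmemI : ∀ᵐ t ∂(volI a), t ∈ Iset a := ae_restrict_mem (Iset_meas a)
  refine ENNReal.le_of_forall_pos_le_add fun ε hε _ => ?_
  set C : ℝ := M.toReal + ε with hCdef
  have hε' : (0:ℝ) < ε := by exact_mod_cast hε
  have hCpos : 0 < C := add_pos_of_nonneg_of_pos ENNReal.toReal_nonneg hε'
  have hCM : ENNReal.ofReal C = M + ε := by
    rw [hCdef, ENNReal.ofReal_add ENNReal.toReal_nonneg hε'.le, ENNReal.ofReal_toReal hMfin,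
      ENNReal.ofReal_coe_nnreal]
  -- essential bound on `h`
  have hhb : ∀ᵐ t ∂(volI a), ENNReal.ofReal |h t| ≤ M := by
    have h1 : ∀ᵐ t ∂(wMeas (Iset a) w), ENNReal.ofReal |h t| ≤ M := ae_le_essSup
    unfold wMeas at h1
    rw [ae_withDensity_iff (f := fun t => ENNReal.ofReal (w t))
      (ENNReal.measurable_ofReal.comp hw_meas)] at h1
    filter_upwards [h1, hmemI] with t h2 h3
    have hwp := hw_pos t h3
    exact h2 (by simpa using hwp)
  -- the extended weight
  set k : ℝ≥0∞ → ℝ≥0∞ := fun t =>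
    ⨅ r : ℝ, ⨅ _ : r ∈ Iset a, ⨅ _ : ENNReal.ofReal r ≤ t, ENNReal.ofReal (C * w r) with hk
  have hkanti : Antitone k := by
    intro s t hst
    refine le_iInf fun r => le_iInf fun hr => le_iInf fun hrs => ?_
    exact iInf_le_of_le r (iInf_le_of_le hr (iInf_le_of_le (hrs.trans hst) le_rfl))
  have hkle : ∀ (r : ℝ) (t : ℝ≥0∞), r ∈ Iset a → ENNReal.ofReal r ≤ t →
      k t ≤ ENNReal.ofReal (C * w r) := fun r t hr hrt =>
    iInf_le_of_le r (iInf_le_of_le hr (iInf_le_of_le hrt le_rfl))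
  have hkge : ∀ t ∈ Iset a, ENNReal.ofReal (C * w t) ≤ k (ENNReal.ofReal t) := by
    intro t ht
    refine le_iInf fun r => le_iInf fun hr => le_iInf fun hrs => ?_
    refine ENNReal.ofReal_le_ofReal (mul_le_mul_of_nonneg_left ?_ hCpos.le)
    exact hw_anti hr ht ((ENNReal.ofReal_le_ofReal_iff ht.1.le).1 hrs)
  have hktop : ∀ s, k ⊤ < s → ∃ r, r ≠ ⊤ ∧ k r ≤ s := by
    intro s hs
    simp only [hk, iInf_lt_iff] at hs
    obtain ⟨r, hr, _, hs⟩ := hs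
    exact ⟨ENNReal.ofReal r, ENNReal.ofReal_ne_top, (hkle r _ hr le_rfl).trans hs.le⟩
  set F : ℝ → ℝ≥0∞ := fun x => ENNReal.ofReal |f x| with hF
  have hFm : Measurable F := ENNReal.measurable_ofReal.comp hf.abs
  set σ := rk (volI a) F with hσ
  have hσm : Measurable σ := rk_meas _ F hFm
  set m : ℝ → ℝ := fun x => (min (F x) (k (σ x))).toReal with hm
  have hmm : Measurable m := (hFm.min (hkanti.measurable.comp hσm)).ennreal_toReal
  have hmF : ∀ x, ENNReal.ofReal (m x) = min (F x) (k (σ x)) := fun x =>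
    ENNReal.ofReal_toReal (ne_top_of_le_ne_top ENNReal.ofReal_ne_top (min_le_left _ _))
  have hm0 : ∀ x, 0 ≤ m x := fun x => ENNReal.toReal_nonneg
  have hmle : ∀ x, m x ≤ |f x| := fun x => by
    rw [← ENNReal.ofReal_le_ofReal_iff (abs_nonneg _), hmF]
    exact min_le_left _ _
  set v : ℝ → ℝ := fun x => if 0 ≤ f x then m x else - m x with hv
  have hvm : Measurable v := Measurable.ite (measurableSet_le measurable_const hf) hmm hmm.neg
  have hvabs : ∀ x, |v x| = m x := fun x => by
    simp only [hv]
    split_ifs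
    · exact abs_of_nonneg (hm0 x)
    · rw [abs_neg]; exact abs_of_nonneg (hm0 x)
  have huabs : ∀ x, |f x - v x| = |f x| - m x := fun x => by
    have h1 := hmle x
    simp only [hv]
    split_ifs with h2
    · rw [abs_of_nonneg h2] at h1 ⊢
      exact abs_of_nonneg (by linarith)
    · push Not at h2
      rw [abs_of_neg h2] at h1 ⊢
      rw [abs_of_nonpos (by linarith)]
      ring
  refine le_trans (sInf_le ⟨fun x => f x - v x, v, C, hf.sub hvm, hvm, hCpos.le, ?_, ?_, rfl⟩) ?_
  · exact Filter.Eventually.of_forall fun x => by ring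
  · intro t ht
    refine sInf_le ⟨ENNReal.ofReal_pos.2 (mul_pos hCpos (hw_pos t ht)), ?_⟩
    refine le_trans (measure_mono ?_) (rk_measure a F hFm (ENNReal.ofReal t)
      ENNReal.ofReal_ne_top).1
    intro x hx
    have hx' : ENNReal.ofReal (C * w t) < ENNReal.ofReal |v x| := hx
    rw [hvabs, hmF] at hx'
    show σ x ≤ ENNReal.ofReal t
    by_contra h3
    exact absurd (lt_of_lt_of_le hx' ((min_le_right _ _).trans
      (hkle t (σ x) ht (not_le.1 h3).le))) (lt_irrefl _)
  · rw [hCM, ← add_assoc]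
    refine add_le_add (add_le_add ?_ le_rfl) le_rfl
    calc ∫⁻ x in Iset a, ENNReal.ofReal |f x - v x|
        = ∫⁻ x, (F x - k (σ x)) ∂(volI a) := by
          refine lintegral_congr fun x => ?_
          rw [huabs, ENNReal.ofReal_sub _ (hm0 x), hmF]
          exact tsub_min
      _ ≤ ∫⁻ t, (rearrE (volI a) F t - k (ENNReal.ofReal t)) ∂(volI a) :=
          construct_le a F hFm k hkanti hktop
      _ ≤ ∫⁻ t, ENNReal.ofReal |g t| * ENNReal.ofReal (w t) ∂(volI a) := by
          refine lintegral_mono_ae ?_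
          filter_upwards [hgh, hhb, hmemI] with t h1 h2 h3
          have h0 : ENNReal.ofReal (w t) ≠ 0 := by simpa using hw_pos t h3
          have h4 : rearrE (volI a) F t =
              ENNReal.ofReal (g t + h t) * ENNReal.ofReal (w t) := by
            rw [← h1.2, ENNReal.div_mul_cancel h0 ENNReal.ofReal_ne_top]
            rfl
          rw [tsub_le_iff_right, h4]
          refine le_trans ?_ (add_le_add le_rfl (hkge t h3))
          rw [ENNReal.ofReal_mul hCpos.le, ← add_mul]
          gcongr
          calc ENNReal.ofReal (g t + h t) ≤ ENNReal.ofReal (|g t| + |h t|) :=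
                ENNReal.ofReal_le_ofReal (add_le_add (le_abs_self _) (le_abs_self _))
            _ = ENNReal.ofReal |g t| + ENNReal.ofReal |h t| :=
                ENNReal.ofReal_add (abs_nonneg _) (abs_nonneg _)
            _ ≤ _ := by
                refine add_le_add le_rfl (h2.trans ?_)
                rw [hCM]; exact le_self_add


/-- For a non-increasing positive weight `w` with `W` finite on `I` and any
measurable `f` on `I`, `A(f) = B(f)`, i.e. `M_{L₁+L∞,w} = L₁ + M_{L∞,w}` with equal gauges. -/
theorem stmt_15 (a : ℝ≥0∞) (ha : 0 < a) (w : ℝ → ℝ)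
    (hw_pos : ∀ x ∈ Iset a, 0 < w x) (hw_anti : AntitoneOn w (Iset a)) (hw_meas : Measurable w)
    (hW_fin : ∀ t ∈ Iset a, ∫⁻ s in Set.Ioo 0 t, ENNReal.ofReal (w s) ≠ ∞)
    (f : ℝ → ℝ) (hf : Measurable f) :
    Anorm a w f = Bnorm a w f := by
  exact le_antisymm (A_le_B a w hw_pos hw_meas f hf) (B_le_A a w hw_pos hw_anti hw_meas f hf)
end
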